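/- Assume σ > 0. Then there exist R > 0 and a sequence (b_n)_{n≥−1} of real numbers with b_{−1} = √2/σ such that for all real q > R: ζ_{N+1}(q) = ∑_{n=−1}^∞ b_n q^{−n/2} and ζ̂_{N̂+1}(q) = ∑_{n=−1}^∞ (−1)^{n+1} b_n q^{−n/2}; the functions q ↦ ζ_{N+1}(q) and q ↦ ζ̂_{N̂+1}(q) are differentiable on (R, ∞); and the derivatives are given by the termwise-differentiated series ζ_{N+1}′(q) = ∑_{n=1}^∞ ((2−n)/2)·b_{n−2}·q^{−n/2} and −ζ̂_{N̂+1}′(q) = ∑_{n=1}^∞ (−1)^n·((2−n)/2)·b_{n−2}·q^{−n/2}, both of which converge absolutely for every q ∈ ℂ with |q| > R. -/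

import Mathlib

/-- The Laplace exponent of a hyperexponential Lévy process, extended to a rational
function on `ℂ`. -/
noncomputable def psi (σ A : ℝ) (N Nh : ℕ) (aa ρ ah ρh : ℕ → ℝ) (z : ℂ) : ℂ :=
  (σ : ℂ) ^ 2 * z ^ 2 / 2 + (A : ℂ) * z
    + z * ∑ ℓ ∈ Finset.Icc 1 N, (aa ℓ : ℂ) / ((ρ ℓ : ℂ) - z)
    - z * ∑ ℓ ∈ Finset.Icc 1 Nh, (ah ℓ : ℂ) / ((ρh ℓ : ℂ) + z)

open Filter Topology

lemma aux_inverse (h : ℝ → ℝ) (hh : AnalyticAt ℝ h 0) (c : ℝ) (hc : 0 < c) (h0 : h 0 = c) :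
    ∃ g : ℝ → ℝ, AnalyticAt ℝ g 0 ∧ g 0 = 1 / Real.sqrt c ∧ ∃ ε > 0, ∀ w x : ℝ,
      |w| < ε → 0 < x * w → x ^ 2 * h w = w ^ 2 → 1 / w = g x / x := by
  have hs : AnalyticAt ℝ (fun w => Real.sqrt (h w)) 0 := by
    have h1 : AnalyticAt ℝ Real.sqrt (h 0) := by
      exact ContDiffAt.analyticAt (Real.contDiffAt_sqrt (by rw [h0]; exact hc.ne'))
    exact h1.comp hh
  have hc' : Real.sqrt c ≠ 0 := (Real.sqrt_pos.2 hc).ne'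
  have hφ : AnalyticAt ℝ (fun w => w * (Real.sqrt (h w))⁻¹) 0 :=
    analyticAt_id.mul (hs.inv (by rw [h0]; exact hc'))
  set φ : ℝ → ℝ := fun w => w * (Real.sqrt (h w))⁻¹ with hφdef
  have hφ0 : φ 0 = 0 := by simp [hφdef]
  have hd : HasDerivAt φ (Real.sqrt c)⁻¹ 0 := by
    have := (hasDerivAt_id (0:ℝ)).mul (hs.inv (by rw [h0]; exact hc')).differentiableAt.hasDerivAt
    simp only [id, one_mul, zero_mul, add_zero, Pi.inv_apply, h0] at this
    exact this
  have hd' : deriv φ 0 ≠ 0 := by rw [hd.deriv]; exact inv_ne_zero hc'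
  have hfa := hφ.analyticAt_localInverse hd'
  have hsd := hφ.hasStrictDerivAt
  have hleft := hsd.eventually_left_inverse hd'
  have hfd := hsd.to_localInverse hd'
  set f := hsd.localInverse φ (deriv φ 0) 0 hd' with hf
  have hf0 : f 0 = 0 := by
    have := hleft.self_of_nhds
    rwa [hφ0] at this
  rw [hφ0] at hfa hfd
  obtain ⟨p, hp⟩ := hfa
  have hk : AnalyticAt ℝ (dslope f 0) 0 := ⟨_, hp.has_fpower_series_dslope_fslope⟩
  have hk0 : dslope f 0 0 = Real.sqrt c := by
    rw [dslope_same, hfd.hasDerivAt.deriv, hd.deriv, inv_inv]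
  refine ⟨fun x => (dslope f 0 x)⁻¹, hk.inv (by rw [hk0]; exact hc'), by beta_reduce; rw [hk0, one_div], ?_⟩
  have hposev : ∀ᶠ w in 𝓝 (0:ℝ), 0 < h w :=
    hh.continuousAt.eventually (lt_mem_nhds (by rw [h0]; exact hc))
  obtain ⟨ε, hε, H⟩ := Metric.eventually_nhds_iff.1 (hleft.and hposev)
  refine ⟨ε, hε, fun w x hw hxw he => ?_⟩
  obtain ⟨h1, h2⟩ := H (y := w) (by simpa using hw)
  have hx0 : x ≠ 0 := by rintro rfl; simp at hxw
  have hw0 : w ≠ 0 := by rintro rfl; simp at hxw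
  have hsp := Real.sqrt_pos.2 h2
  have hsq := Real.sq_sqrt h2.le
  have hφw : φ w = x := by
    have : w = x * Real.sqrt (h w) := by
      have h3 : (w - x * Real.sqrt (h w)) * (w + x * Real.sqrt (h w)) = 0 := by
        have : (w - x * Real.sqrt (h w)) * (w + x * Real.sqrt (h w))
          = w ^ 2 - x ^ 2 * (Real.sqrt (h w)) ^ 2 := by ring
        rw [this, hsq, he]; ring
      rcases mul_eq_zero.1 h3 with h4 | h4
      · linarith
      · exfalso
        have h5 : x * w + x ^ 2 * Real.sqrt (h w) = 0 := by
          have : x * (w + x * Real.sqrt (h w)) = 0 := by rw [h4]; ring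
          linarith
        have : 0 ≤ x ^ 2 * Real.sqrt (h w) := by positivity
        linarith
    simp only [hφdef]
    rw [← div_eq_mul_inv, div_eq_iff hsp.ne']
    exact this
  have hfx : f x = w := by rw [← hφw]; exact h1
  simp only [dslope_of_ne _ hx0, slope_def_field, hf0, hfx]
  field_simp
  simp

lemma aux_series (g : ℝ → ℝ) (hg : AnalyticAt ℝ g 0) :
    ∃ b : ℕ → ℝ, b 0 = g 0 ∧ ∃ r > 0, ∃ C, (∀ n, |b n| * r ^ n ≤ C) ∧
      ∀ x : ℝ, |x| < r → g x = ∑' n, b n * x ^ n := by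
  obtain ⟨p, R, hp⟩ := hg
  obtain ⟨r, hr0, hr⟩ := ENNReal.lt_iff_exists_nnreal_btwn.1 hp.r_pos
  have hr0' : (0:ℝ) < r := by exact_mod_cast hr0
  obtain ⟨C, -, hC⟩ := p.norm_mul_pow_le_of_lt_radius (hr.trans_le hp.r_le)
  refine ⟨p.coeff, ?_, r, hr0', C, fun n => ?_, fun x hx => ?_⟩
  · exact hp.coeff_zero 1
  · have := hC n
    rwa [FormalMultilinearSeries.norm_apply_eq_norm_coef] at this
  · have hx' : x ∈ Metric.eball (0:ℝ) R := by
      refine Metric.eball_subset_eball hr.le ?_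
      rw [Metric.eball_coe]
      simpa using hx
    have := (hp.hasSum hx').tsum_eq
    rw [zero_add] at this
    rw [← this]
    congr 1; ext n
    simp [FormalMultilinearSeries.apply_eq_pow_smul_coeff, mul_comm]

lemma aux_rpow (q : ℝ) (hq : 0 < q) (n : ℕ) :
    q ^ ((1 - (n : ℝ)) / 2) = Real.sqrt q * (1 / Real.sqrt q) ^ n ∧
    q ^ (-((n : ℝ) + 1) / 2) = (1 / Real.sqrt q) ^ (n + 1) := by
  have h1 : 1 / Real.sqrt q = q ^ (-(1/2) : ℝ) := by
    rw [Real.rpow_neg hq.le, ← Real.sqrt_eq_rpow, one_div]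
  constructor
  · rw [h1, ← Real.rpow_natCast, ← Real.rpow_mul hq.le, Real.sqrt_eq_rpow, ← Real.rpow_add hq]
    congr 1; ring
  · rw [h1, ← Real.rpow_natCast, ← Real.rpow_mul hq.le]
    congr 1; push_cast; ring

lemma aux_inv_sqrt (r q : ℝ) (hr : 0 < r) (hq : 1 / r ^ 2 < q) : 1 / Real.sqrt q < r := by
  have hq0 : 0 < q := lt_trans (by positivity) hq
  have : 1 / r < Real.sqrt q := Real.lt_sqrt_of_sq_lt (by rw [div_pow, one_pow]; exact hq)
  exact (one_div_lt (by positivity) hr).2 this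

lemma aux_summable (b : ℕ → ℝ) (r C : ℝ) (hr : 0 < r) (hb : ∀ n, |b n| * r ^ n ≤ C)
    (s : ℝ) (hs0 : 0 < s) (hs : s < r) :
    Summable (fun n : ℕ => ((n : ℝ) + 1) * |b n| * s ^ n) := by
  have hlt : ‖s / r‖ < 1 := by
    rw [Real.norm_of_nonneg (by positivity), div_lt_one hr]; exact hs
  have h1 := summable_pow_mul_geometric_of_norm_lt_one 1 hlt
  have h2 := summable_pow_mul_geometric_of_norm_lt_one 0 hlt
  refine Summable.of_nonneg_of_le (fun n => by positivity) (fun n => ?_) ((h1.add h2).mul_left C)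
  have h3 : s ^ n = r ^ n * (s / r) ^ n := by rw [div_pow]; field_simp
  calc ((n : ℝ) + 1) * |b n| * s ^ n = (|b n| * r ^ n) * (((n:ℝ) + 1) * (s / r) ^ n) := by
        rw [h3]; ring
    _ ≤ C * (((n:ℝ) + 1) * (s / r) ^ n) := by gcongr; exact hb n
    _ = _ := by rw [pow_one, pow_zero]; ring

lemma aux_coef (n : ℕ) : |(1 - (n : ℝ)) / 2| ≤ (n : ℝ) + 1 := by
  have : (0:ℝ) ≤ n := n.cast_nonneg
  rw [abs_le]; constructor <;> linarith

lemma aux_summable' (b : ℕ → ℝ) (r C : ℝ) (hr : 0 < r) (hb : ∀ n, |b n| * r ^ n ≤ C)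
    (q : ℝ) (hq : 1 / r ^ 2 < q) :
    Summable (fun n : ℕ => |(1 - (n : ℝ)) / 2| * |b n| * q ^ (-((n : ℝ) + 1) / 2)) := by
  have hq0 : 0 < q := lt_trans (by positivity) hq
  have hs := aux_inv_sqrt r q hr hq
  have hs0 : 0 < 1 / Real.sqrt q := by have := Real.sqrt_pos.2 hq0; positivity
  refine Summable.of_nonneg_of_le (fun n => by positivity) (fun n => ?_)
    ((aux_summable b r C hr hb _ hs0 hs).mul_right (1 / Real.sqrt q))
  rw [(aux_rpow q hq0 n).2, pow_succ, ← mul_assoc]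
  gcongr
  exact aux_coef n

lemma aux_deriv (b : ℕ → ℝ) (r C : ℝ) (hr : 0 < r) (hb : ∀ n, |b n| * r ^ n ≤ C)
    (q : ℝ) (hq : 1 / r ^ 2 < q) :
    HasDerivAt (fun q : ℝ => ∑' n : ℕ, b n * q ^ ((1 - (n : ℝ)) / 2))
      (∑' n : ℕ, ((1 - (n : ℝ)) / 2) * b n * q ^ (-((n : ℝ) + 1) / 2)) q := by
  obtain ⟨q', h1, h2⟩ := exists_between hq
  have hq'0 : 0 < q' := lt_trans (by positivity) h1
  have hq0 : 0 < q := hq'0.trans h2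
  refine hasDerivAt_tsum_of_isPreconnected (t := Set.Ioi q') (y₀ := q)
    (g := fun (n : ℕ) (q : ℝ) => b n * q ^ ((1 - (n : ℝ)) / 2))
    (g' := fun (n : ℕ) (q : ℝ) => ((1 - (n : ℝ)) / 2) * b n * q ^ (-((n : ℝ) + 1) / 2))
    (aux_summable' b r C hr hb q' h1) isOpen_Ioi
    isPreconnected_Ioi (fun n y hy => ?_) (fun n y hy => ?_) h2 ?_ h2
  · have hy0 : 0 < y := hq'0.trans hy
    have := (Real.hasDerivAt_rpow_const (x := y) (p := (1 - (n : ℝ)) / 2)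
      (Or.inl hy0.ne')).const_mul (b n)
    refine this.congr_deriv ?_
    rw [show (1 - (n : ℝ)) / 2 - 1 = -((n : ℝ) + 1) / 2 by ring]; ring
  · have hy0 : 0 < y := hq'0.trans hy
    rw [norm_mul, norm_mul, Real.norm_eq_abs, Real.norm_eq_abs,
      Real.norm_of_nonneg (Real.rpow_nonneg hy0.le _)]
    refine mul_le_mul_of_nonneg_left ?_ (by positivity)
    refine Real.rpow_le_rpow_of_nonpos hq'0 (le_of_lt hy) ?_
    have : (0:ℝ) ≤ n := n.cast_nonneg
    linarith
  · have hs := aux_inv_sqrt r q hr hq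
    have hs0 : 0 < 1 / Real.sqrt q := by have := Real.sqrt_pos.2 hq0; positivity
    refine Summable.of_norm_bounded
      ((aux_summable b r C hr hb _ hs0 hs).mul_right (Real.sqrt q)) (fun n => ?_)
    rw [(aux_rpow q hq0 n).1, norm_mul, norm_mul, norm_pow, Real.norm_eq_abs, 
      Real.norm_of_nonneg (Real.sqrt_nonneg q), Real.norm_of_nonneg hs0.le]
    have : (0:ℝ) ≤ n * (|b n| * (1 / Real.sqrt q) ^ n * Real.sqrt q) := by positivity
    nlinarith

lemma aux_summableC (b : ℕ → ℝ) (r C : ℝ) (hr : 0 < r) (hb : ∀ n, |b n| * r ^ n ≤ C)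
    (q : ℂ) (hq : 1 / r ^ 2 < ‖q‖) (e : ℕ → ℝ) (he : ∀ n, |e n| = |(1 - (n : ℝ)) / 2| * |b n|) :
    Summable (fun n : ℕ => ‖((e n : ℝ) : ℂ) * q ^ (-((n : ℂ) + 1) / 2)‖) := by
  refine (aux_summable' b r C hr hb _ hq).congr (fun n => ?_)
  rw [norm_mul, Complex.norm_real, Real.norm_eq_abs, he,
    show (-((n : ℂ) + 1) / 2) = ((-((n : ℝ) + 1) / 2 : ℝ) : ℂ) by push_cast; ring,
    Complex.norm_cpow_real]

noncomputable def hfun (σ A : ℝ) (N Nh : ℕ) (aa ρ ah ρh : ℕ → ℝ) (w : ℝ) : ℝ :=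
  σ ^ 2 / 2 + A * w + w ^ 2 * ∑ ℓ ∈ Finset.Icc 1 N, aa ℓ / (ρ ℓ * w - 1)
    - w ^ 2 * ∑ ℓ ∈ Finset.Icc 1 Nh, ah ℓ / (ρh ℓ * w + 1)

lemma hfun_analytic (σ A : ℝ) (N Nh : ℕ) (aa ρ ah ρh : ℕ → ℝ) :
    AnalyticAt ℝ (hfun σ A N Nh aa ρ ah ρh) 0 := by
  unfold hfun
  refine ((analyticAt_const.add (analyticAt_const.mul analyticAt_id)).add
    ((analyticAt_id.pow 2).mul (Finset.analyticAt_fun_sum _ fun ℓ _ => ?_))).sub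
    ((analyticAt_id.pow 2).mul (Finset.analyticAt_fun_sum _ fun ℓ _ => ?_))
  · exact analyticAt_const.div ((analyticAt_const.mul analyticAt_id).sub analyticAt_const) (by simp)
  · exact analyticAt_const.div ((analyticAt_const.mul analyticAt_id).add analyticAt_const) (by simp)

lemma psi_real (σ A : ℝ) (N Nh : ℕ) (aa ρ ah ρh : ℕ → ℝ) (z q : ℝ)
    (h : psi σ A N Nh aa ρ ah ρh (z : ℂ) = (q : ℂ)) :
    q = σ ^ 2 * z ^ 2 / 2 + A * z + z * ∑ ℓ ∈ Finset.Icc 1 N, aa ℓ / (ρ ℓ - z)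
      - z * ∑ ℓ ∈ Finset.Icc 1 Nh, ah ℓ / (ρh ℓ + z) := by
  unfold psi at h
  have : ((q : ℝ) : ℂ) = ((σ ^ 2 * z ^ 2 / 2 + A * z + z * ∑ ℓ ∈ Finset.Icc 1 N, aa ℓ / (ρ ℓ - z)
      - z * ∑ ℓ ∈ Finset.Icc 1 Nh, ah ℓ / (ρh ℓ + z) : ℝ) : ℂ) := by
    rw [← h]; push_cast; rfl
  exact_mod_cast this

lemma psi_hfun (σ A : ℝ) (N Nh : ℕ) (aa ρ ah ρh : ℕ → ℝ) (z q : ℝ) (hz : z ≠ 0)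
    (h : psi σ A N Nh aa ρ ah ρh (z : ℂ) = (q : ℂ)) :
    q = z ^ 2 * hfun σ A N Nh aa ρ ah ρh (1 / z) := by
  rw [psi_real _ _ _ _ _ _ _ _ z q h]
  unfold hfun
  have e1 : ∑ ℓ ∈ Finset.Icc 1 N, aa ℓ / (ρ ℓ * (1 / z) - 1)
      = z * ∑ ℓ ∈ Finset.Icc 1 N, aa ℓ / (ρ ℓ - z) := by
    rw [Finset.mul_sum]
    refine Finset.sum_congr rfl fun ℓ _ => ?_
    rw [show ρ ℓ * (1 / z) - 1 = (ρ ℓ - z) / z by field_simp, div_div_eq_mul_div]; ring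
  have e2 : ∑ ℓ ∈ Finset.Icc 1 Nh, ah ℓ / (ρh ℓ * (1 / z) + 1)
      = z * ∑ ℓ ∈ Finset.Icc 1 Nh, ah ℓ / (ρh ℓ + z) := by
    rw [Finset.mul_sum]
    refine Finset.sum_congr rfl fun ℓ _ => ?_
    rw [show ρh ℓ * (1 / z) + 1 = (ρh ℓ + z) / z by field_simp, div_div_eq_mul_div]; ring
  rw [e1, e2]
  field_simp

lemma aux_sum_nonneg (N : ℕ) (aa ρ : ℕ → ℝ) (hpos : ∀ ℓ ∈ Finset.Icc 1 N, 0 < aa ℓ)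
    (hρ0 : ρ 0 = 0) (hmono : ∀ i j, i < j → j ≤ N → ρ i < ρ j) (z : ℝ) (hz : ρ N < z) :
    0 < z ∧ 0 ≤ ∑ ℓ ∈ Finset.Icc 1 N, aa ℓ / (z - ρ ℓ) := by
  have hle : ∀ ℓ ≤ N, ρ ℓ ≤ ρ N := fun ℓ hℓ => by
    rcases hℓ.eq_or_lt with h | h
    · rw [h]
    · exact (hmono _ _ h le_rfl).le
  refine ⟨by have := hle 0 (Nat.zero_le _); linarith, Finset.sum_nonneg fun ℓ hℓ => ?_⟩
  have := hle ℓ (Finset.mem_Icc.1 hℓ).2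
  exact div_nonneg (hpos ℓ hℓ).le (by linarith)

lemma aux_sum_nonneg' (N : ℕ) (aa ρ : ℕ → ℝ) (hpos : ∀ ℓ ∈ Finset.Icc 1 N, 0 < aa ℓ)
    (hρ0 : ρ 0 = 0) (hmono : ∀ i j, i < j → j ≤ N → ρ i < ρ j) (z : ℝ) (hz : 0 < z) :
    0 ≤ ∑ ℓ ∈ Finset.Icc 1 N, aa ℓ / (ρ ℓ + z) := by
  refine Finset.sum_nonneg fun ℓ hℓ => ?_
  have h := Finset.mem_Icc.1 hℓ
  have := hmono 0 ℓ h.1 h.2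
  exact div_nonneg (hpos ℓ hℓ).le (by linarith)

lemma aux_large (σ A M z q : ℝ) (hz : 0 < z) (hq : q ≤ σ ^ 2 * z ^ 2 / 2 + |A| * z)
    (hM : σ ^ 2 * M ^ 2 / 2 + |A| * M < q) : M < z := by
  by_contra hcon
  push Not at hcon
  have : σ ^ 2 * z ^ 2 / 2 + |A| * z ≤ σ ^ 2 * M ^ 2 / 2 + |A| * M := by gcongr
  linarith

/-- For `σ > 0`: series expansions of `ζ_{N+1}`, `ζ̂_{N̂+1}` in powers of `q^{-1/2}` with
`b_{-1} = √2/σ`, differentiability in `q` on `(R, ∞)`, and the termwise-differentiated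
series for the derivatives, which converge absolutely for `|q| > R`.
Here `b n` denotes the paper's `b_{n-1}`. -/
theorem extra_roots_derivative_series_sigma_pos
    (σ A : ℝ) (N Nh : ℕ) (aa ρ ah ρh : ℕ → ℝ)
    (hσ : 0 < σ)
    (hpos : ∀ ℓ ∈ Finset.Icc 1 N, 0 < aa ℓ)
    (hposh : ∀ ℓ ∈ Finset.Icc 1 Nh, 0 < ah ℓ)
    (hρ0 : ρ 0 = 0) (hρh0 : ρh 0 = 0)
    (hmono : ∀ i j, i < j → j ≤ N → ρ i < ρ j)
    (hmonoh : ∀ i j, i < j → j ≤ Nh → ρh i < ρh j)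
    (ζM ζhM : ℝ → ℝ)
    (hζM : ∀ q : ℝ, 0 < q → ρ N < ζM q ∧ psi σ A N Nh aa ρ ah ρh (ζM q : ℂ) = (q : ℂ))
    (hζhM : ∀ q : ℝ, 0 < q → ρh Nh < ζhM q ∧
        psi σ A N Nh aa ρ ah ρh (-(ζhM q : ℝ) : ℂ) = (q : ℂ)) :
    ∃ R > (0 : ℝ), ∃ b : ℕ → ℝ, b 0 = Real.sqrt 2 / σ ∧
      -- series expansions of the roots themselves, for real q > R
      (∀ q : ℝ, R < q →
        ζM q = ∑' n : ℕ, b n * q ^ ((1 - (n : ℝ)) / 2) ∧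
        ζhM q = ∑' n : ℕ, (-1 : ℝ) ^ n * b n * q ^ ((1 - (n : ℝ)) / 2)) ∧
      -- differentiability and the termwise-differentiated series
      (∀ q : ℝ, R < q →
        HasDerivAt ζM
          (∑' n : ℕ, ((1 - (n : ℝ)) / 2) * b n * q ^ (-((n : ℝ) + 1) / 2)) q ∧
        HasDerivAt ζhM
          (-∑' n : ℕ, (-1 : ℝ) ^ (n + 1) * ((1 - (n : ℝ)) / 2) * b n
              * q ^ (-((n : ℝ) + 1) / 2)) q) ∧
      -- absolute convergence of both differentiated series for all complex |q| > R
      (∀ q : ℂ, R < ‖q‖ →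
        Summable (fun n : ℕ =>
          ‖((((1 - (n : ℝ)) / 2) * b n : ℝ) : ℂ) * q ^ (-((n : ℂ) + 1) / 2)‖) ∧
        Summable (fun n : ℕ =>
          ‖(((-1 : ℝ) ^ (n + 1) * ((1 - (n : ℝ)) / 2) * b n : ℝ) : ℂ)
              * q ^ (-((n : ℂ) + 1) / 2)‖)) := by
  set h := hfun σ A N Nh aa ρ ah ρh with hh
  have h0 : h 0 = σ ^ 2 / 2 := by simp [hh, hfun]
  obtain ⟨g, hg, hg0, ε, hε, H⟩ := aux_inverse h (hfun_analytic _ _ _ _ _ _ _ _) (σ ^ 2 / 2)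
    (by positivity) h0
  obtain ⟨b, hb0, r, hr, C, hb, hgb⟩ := aux_series g hg
  set M : ℝ := 1 / ε with hM
  have hM0 : 0 < M := by positivity
  set R : ℝ := max (1 / r ^ 2) (σ ^ 2 * M ^ 2 / 2 + |A| * M) with hR
  have hRpos : 0 < R := lt_of_lt_of_le (by positivity) (le_max_left _ _)
  have hR1 : 1 / r ^ 2 ≤ R := le_max_left _ _
  have hR2 : σ ^ 2 * M ^ 2 / 2 + |A| * M ≤ R := le_max_right _ _
  have hb' : ∀ n, |(-1 : ℝ) ^ n * b n| * r ^ n ≤ C := fun n => by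
    simpa [abs_mul] using hb n
  -- key consequence of the local inversion
  have key : ∀ z x : ℝ, M < |z| → 0 < x * z → x ^ 2 * h (1 / z) = (1 / z) ^ 2 → |x| < r →
      z = (1 / x) * ∑' n, b n * x ^ n := fun z x hz hxz he hx => by
    have hz0 : 0 < |z| := hM0.trans hz
    have hz0' : z ≠ 0 := abs_pos.1 hz0
    have := H (1 / z) x (by
      rw [abs_div, abs_one]; exact (one_div_lt hz0 hε).2 hz) (by
      have : x * (1 / z) = x * z * (1 / z) ^ 2 := by field_simp
      rw [this]; positivity) he
    rw [one_div_one_div] at this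
    rw [← hgb x hx, this]; ring
  have ser1 : ∀ q : ℝ, R < q → ζM q = ∑' n : ℕ, b n * q ^ ((1 - (n : ℝ)) / 2) := fun q hq => by
    have hq0 : 0 < q := hRpos.trans hq
    obtain ⟨hz1, hz2⟩ := hζM q hq0
    obtain ⟨hz0, hS1⟩ := aux_sum_nonneg N aa ρ hpos hρ0 hmono _ hz1
    have hS2 := aux_sum_nonneg' Nh ah ρh hposh hρh0 hmonoh _ hz0
    have hlarge : M < ζM q := by
      refine aux_large σ A M _ q hz0 ?_ (hR2.trans_lt hq)
      have e := psi_real _ _ _ _ _ _ _ _ _ _ hz2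
      have e1 : ∑ ℓ ∈ Finset.Icc 1 N, aa ℓ / (ρ ℓ - ζM q)
          = - ∑ ℓ ∈ Finset.Icc 1 N, aa ℓ / (ζM q - ρ ℓ) := by
        rw [← Finset.sum_neg_distrib]
        exact Finset.sum_congr rfl fun ℓ _ => by rw [← div_neg, neg_sub]
      rw [e1] at e
      have := mul_nonneg hz0.le hS1
      have := mul_nonneg hz0.le hS2
      have := mul_le_mul_of_nonneg_right (le_abs_self A) hz0.le
      linarith
    have hsq := Real.sqrt_pos.2 hq0
    have e := psi_hfun _ _ _ _ _ _ _ _ _ _ hz0.ne' hz2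
    have hx0 : 0 < 1 / Real.sqrt q := by positivity
    rw [key (ζM q) (1 / Real.sqrt q) (by rwa [abs_of_pos hz0]) (by positivity) (by
      rw [div_pow, Real.sq_sqrt hq0.le, div_pow, one_pow]
      rw [← hh] at e
      field_simp
      linarith) (by rw [abs_of_pos hx0]; exact aux_inv_sqrt r q hr (hR1.trans_lt hq)),
      one_div_one_div, ← tsum_mul_left]
    refine tsum_congr fun n => ?_
    rw [(aux_rpow q hq0 n).1]; ring
  have ser2 : ∀ q : ℝ, R < q →
      ζhM q = ∑' n : ℕ, (-1 : ℝ) ^ n * b n * q ^ ((1 - (n : ℝ)) / 2) := fun q hq => by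
    have hq0 : 0 < q := hRpos.trans hq
    obtain ⟨hz1, hz2⟩ := hζhM q hq0
    rw [← Complex.ofReal_neg] at hz2
    obtain ⟨hz0, hS1⟩ := aux_sum_nonneg Nh ah ρh hposh hρh0 hmonoh _ hz1
    have hS2 := aux_sum_nonneg' N aa ρ hpos hρ0 hmono _ hz0
    have hlarge : M < ζhM q := by
      refine aux_large σ A M _ q hz0 ?_ (hR2.trans_lt hq)
      have e := psi_real _ _ _ _ _ _ _ _ _ _ hz2
      have e1 : ∑ ℓ ∈ Finset.Icc 1 Nh, ah ℓ / (ρh ℓ + -ζhM q)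
          = - ∑ ℓ ∈ Finset.Icc 1 Nh, ah ℓ / (ζhM q - ρh ℓ) := by
        rw [← Finset.sum_neg_distrib]
        exact Finset.sum_congr rfl fun ℓ _ => by rw [← div_neg, neg_sub, sub_eq_add_neg]
      simp only [e1, sub_neg_eq_add] at e
      have := mul_nonneg hz0.le hS1
      have := mul_nonneg hz0.le hS2
      have := mul_le_mul_of_nonneg_right (neg_abs_le A) hz0.le
      linarith
    have hsq := Real.sqrt_pos.2 hq0
    have e := psi_hfun _ _ _ _ _ _ _ _ _ _ (neg_ne_zero.2 hz0.ne') hz2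
    have hx0 : 0 < 1 / Real.sqrt q := by positivity
    have k := key (-ζhM q) (-(1 / Real.sqrt q)) (by rwa [abs_neg, abs_of_pos hz0])
      (by rw [neg_mul_neg]; positivity) (by
      rw [← hh] at e
      rw [neg_sq, div_pow, Real.sq_sqrt hq0.le, div_pow, one_pow]
      have hz00 : (-ζhM q) ^ 2 ≠ 0 := pow_ne_zero _ (neg_ne_zero.2 hz0.ne')
      rw [div_mul_eq_mul_div, div_eq_div_iff hq0.ne' hz00]
      linarith) (by rw [abs_neg, abs_of_pos hx0]; exact aux_inv_sqrt r q hr (hR1.trans_lt hq))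
    rw [one_div_neg_eq_neg_one_div, one_div_one_div, neg_mul, neg_inj, ← tsum_mul_left] at k
    rw [k]
    refine tsum_congr fun n => ?_
    rw [(aux_rpow q hq0 n).1, neg_pow]; ring
  refine ⟨R, hRpos, b, ?_, fun q hq => ⟨ser1 q hq, ser2 q hq⟩, fun q hq => ⟨?_, ?_⟩,
    fun q hq => ⟨?_, ?_⟩⟩
  · rw [hb0, hg0, Real.sqrt_div (sq_nonneg σ), Real.sqrt_sq hσ.le, one_div_div]
  · refine (aux_deriv b r C hr hb q (hR1.trans_lt hq)).congr_of_eventuallyEq ?_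
    filter_upwards [lt_mem_nhds hq] with y hy using ser1 y hy
  · have := (aux_deriv _ r C hr hb' q (hR1.trans_lt hq)).congr_of_eventuallyEq (f₁ := ζhM) (by
      filter_upwards [lt_mem_nhds hq] with y hy using ser2 y hy)
    refine this.congr_deriv ?_
    rw [← tsum_neg]
    refine tsum_congr fun n => ?_
    rw [pow_succ]; ring
  · exact aux_summableC b r C hr hb q (hR1.trans_lt hq) _ fun n => abs_mul _ _
  · exact aux_summableC b r C hr hb q (hR1.trans_lt hq) _ fun n => by simp [abs_mul]
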